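/- The permutation (27, 33, 35, 22, 21, 26, 32, 31, 28, 30, 34, 19, 12, 20, 29, 25, 11, 18, 24, 9, 7, 10, 17, 16, 13, 15, 23, 4, 2, 5, 14, 8, 1, 3, 6, 0) of length 36 is bicrucial. -/

import Mathlib

/-- The permutation `σ` of length `n` has a square starting at position `k`
with half-length `ℓ`: the factors `(σ k, …, σ (k+ℓ-1))` and
`(σ (k+ℓ), …, σ (k+2ℓ-1))` are order-isomorphic. -/
def HasSquareAt {n : ℕ} (σ : Fin n → Fin n) (k ℓ : ℕ) : Prop :=
  2 ≤ ℓ ∧ ∃ hb : k + 2 * ℓ ≤ n, ∀ (i j : ℕ) (hi : i < ℓ) (hj : j < ℓ),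
    (σ ⟨k + i, by omega⟩ < σ ⟨k + j, by omega⟩ ↔
      σ ⟨k + ℓ + i, by omega⟩ < σ ⟨k + ℓ + j, by omega⟩)

/-- `σ` contains a square. -/
def ContainsSquare {n : ℕ} (σ : Fin n → Fin n) : Prop :=
  ∃ k ℓ : ℕ, HasSquareAt σ k ℓ

/-- `σ` is square-free: it contains no square. -/
def SquareFree {n : ℕ} (σ : Fin n → Fin n) : Prop :=
  ¬ ContainsSquare σ

/-- `π` (of length `n+1`) is a right-extension of `σ` (of length `n`):
the prefix `(π 0, …, π (n-1))` is order-isomorphic to `σ`. -/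
def IsRightExtension {n : ℕ} (σ : Fin n → Fin n) (π : Fin (n + 1) → Fin (n + 1)) : Prop :=
  ∀ i j : Fin n, π i.castSucc < π j.castSucc ↔ σ i < σ j

/-- `π` (of length `n+1`) is a left-extension of `σ` (of length `n`):
the suffix `(π 1, …, π n)` is order-isomorphic to `σ`. -/
def IsLeftExtension {n : ℕ} (σ : Fin n → Fin n) (π : Fin (n + 1) → Fin (n + 1)) : Prop :=
  ∀ i j : Fin n, π i.succ < π j.succ ↔ σ i < σ j

/-- `σ` is right-crucial: square-free, and every right-extension contains a square. -/
def RightCrucial {n : ℕ} (σ : Equiv.Perm (Fin n)) : Prop :=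
  SquareFree ⇑σ ∧ ∀ π : Equiv.Perm (Fin (n + 1)), IsRightExtension ⇑σ ⇑π → ContainsSquare ⇑π

/-- `σ` is left-crucial: square-free, and every left-extension contains a square. -/
def LeftCrucial {n : ℕ} (σ : Equiv.Perm (Fin n)) : Prop :=
  SquareFree ⇑σ ∧ ∀ π : Equiv.Perm (Fin (n + 1)), IsLeftExtension ⇑σ ⇑π → ContainsSquare ⇑π

/-- `σ` is bicrucial: both left-crucial and right-crucial. -/
def Bicrucial {n : ℕ} (σ : Equiv.Perm (Fin n)) : Prop :=
  LeftCrucial σ ∧ RightCrucial σ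

/-- The displayed sequence. -/
def seq36 (i : ℕ) : ℕ :=
  [27, 33, 35, 22, 21, 26, 32, 31, 28, 30, 34, 19, 12, 20, 29, 25, 11, 18,
        24, 9, 7, 10, 17, 16, 13, 15, 23, 4, 2, 5, 14, 8, 1, 3, 6, 0].getD i 0

/-- Boolean test for a square of `f` at `k` with half-length `l`. -/
def sqB (f : ℕ → ℕ) (k l : ℕ) : Bool :=
  (List.range l).all fun i => (List.range l).all fun j =>
    Nat.blt (f (k + i)) (f (k + j)) == Nat.blt (f (k + l + i)) (f (k + l + j))

/-- Boolean test for a square of `f` inside the first `n` positions. -/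
def hasB (f : ℕ → ℕ) (n : ℕ) : Bool :=
  (List.range n).any fun k => (List.range n).any fun l =>
    Nat.ble 2 l && Nat.ble (k + 2 * l) n && sqB f k l

theorem sqB_iff (f : ℕ → ℕ) (k l : ℕ) : sqB f k l = true ↔
    ∀ i j, i < l → j < l → (f (k + i) < f (k + j) ↔ f (k + l + i) < f (k + l + j)) := by
  have hb : ∀ a b c d : ℕ, (Nat.blt a b = Nat.blt c d) ↔ (a < b ↔ c < d) := by
    intro a b c d
    rw [Bool.eq_iff_iff, Nat.blt_eq, Nat.blt_eq]
  simp only [sqB, List.all_eq_true, List.mem_range, beq_iff_eq, hb]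
  exact ⟨fun h i j hi hj => h i hi j hj, fun h i hi j hj => h i j hi hj⟩

theorem containsSquare_iff {n : ℕ} (σ : Fin n → Fin n) (f : ℕ → ℕ)
    (h : ∀ i j : Fin n, σ i < σ j ↔ f i < f j) : ContainsSquare σ ↔ hasB f n = true := by
  simp only [hasB, List.any_eq_true, List.mem_range, Bool.and_eq_true, Nat.ble_eq, sqB_iff,
    ContainsSquare, HasSquareAt, h]
  constructor
  · rintro ⟨k, l, h2, hb, hs⟩
    exact ⟨k, by omega, l, by omega, ⟨h2, hb⟩, hs⟩
  · rintro ⟨k, -, l, -, ⟨h2, hb⟩, hs⟩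
    exact ⟨k, l, h2, hb, hs⟩

/-- Right extension with the new value inserted just below `t`. -/
def extR (t i : ℕ) : ℕ := if i < 36 then 2 * seq36 i + 1 else 2 * t

/-- Left extension with the new value inserted just below `t`. -/
def extL (t : ℕ) : ℕ → ℕ
  | 0 => 2 * t
  | i + 1 => 2 * seq36 i + 1

theorem seq36_free : hasB seq36 36 = false := by decide +kernel

theorem extR_sq : ∀ t < 37, hasB (extR t) 37 = true := by decide +kernel

theorem extL_sq : ∀ t < 37, hasB (extL t) 37 = true := by decide +kernel

/-- The position of the new value `c` among the old values `g i`. -/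
theorem exists_threshold {n : ℕ} (σ : Equiv.Perm (Fin n)) (g : Fin n → Fin (n + 1))
    (c : Fin (n + 1)) (hg : ∀ i j, g i < g j ↔ σ i < σ j) (hc : ∀ i, g i ≠ c) :
    ∃ t < n + 1, ∀ i, (g i < c ↔ (σ i : ℕ) < t) ∧ (c < g i ↔ t ≤ (σ i : ℕ)) := by
  classical
  have hex : ∃ v : ℕ, ∀ i, (σ i : ℕ) = v → c < g i :=
    ⟨n, fun i hi => absurd (σ i).isLt (by omega)⟩
  have hle : Nat.find hex ≤ n :=
    Nat.find_min' hex (fun i hi => absurd (σ i).isLt (by omega))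
  have h1 : ∀ i, (σ i : ℕ) < Nat.find hex → g i < c := by
    intro i hi
    have := Nat.find_min hex hi
    push Not at this
    obtain ⟨j, hj, hj'⟩ := this
    have : j = i := σ.injective (Fin.ext hj)
    subst this
    exact lt_of_le_of_ne hj' (hc j)
  have h2 : ∀ i, Nat.find hex ≤ (σ i : ℕ) → c < g i := by
    intro i hi
    have hlt : Nat.find hex < n := lt_of_le_of_lt hi (σ i).isLt
    have hs := Nat.find_spec hex (σ.symm ⟨Nat.find hex, hlt⟩) (by simp)
    refine lt_of_lt_of_le hs (not_lt.1 fun hh => ?_)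
    rw [hg, Equiv.apply_symm_apply, Fin.lt_def] at hh
    simp only at hh
    omega
  refine ⟨Nat.find hex, by omega, fun i => ⟨⟨fun h => ?_, h1 i⟩, ⟨fun h => ?_, h2 i⟩⟩⟩
  · by_contra hh
    exact lt_asymm h (h2 i (by omega))
  · by_contra hh
    exact lt_asymm h (h1 i (by omega))

/-- The displayed permutation of length 36 is bicrucial. -/
theorem bicrucial_example_36 (σ : Equiv.Perm (Fin 36))
    (hσ : ∀ i : Fin 36,
      (σ i : ℕ) = [27, 33, 35, 22, 21, 26, 32, 31, 28, 30, 34, 19, 12, 20, 29, 25, 11, 18,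
        24, 9, 7, 10, 17, 16, 13, 15, 23, 4, 2, 5, 14, 8, 1, 3, 6, 0].getD (i : ℕ) 0) :
    Bicrucial σ := by
  have hs : ∀ i : Fin 36, (σ i : ℕ) = seq36 i := hσ
  clear hσ
  have hfree : SquareFree ⇑σ := by
    unfold SquareFree
    rw [containsSquare_iff _ seq36 (fun i j => by rw [Fin.lt_def, hs, hs]), seq36_free]
    simp
  refine ⟨⟨hfree, fun π hπ => ?_⟩, ⟨hfree, fun π hπ => ?_⟩⟩
  · obtain ⟨t, ht, h⟩ := exists_threshold σ (fun i => π i.succ) (π 0) hπ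
      (fun i hi => Fin.succ_ne_zero i (π.injective hi))
    refine (containsSquare_iff _ (extL t) ?_).2 (extL_sq t ht)
    intro i j
    refine Fin.cases ?_ (fun i => ?_) i <;> refine Fin.cases ?_ (fun j => ?_) j
    · simp
    · rw [(h j).2, hs]
      simp only [Fin.val_zero, Fin.val_succ, extL]
      omega
    · rw [(h i).1, hs]
      simp only [Fin.val_zero, Fin.val_succ, extL]
      omega
    · rw [hπ i j, Fin.lt_def, hs, hs]
      simp only [Fin.val_succ, extL]
      omega
  · obtain ⟨t, ht, h⟩ := exists_threshold σ (fun i => π i.castSucc) (π (Fin.last 36)) hπ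
      (fun i hi => (Fin.castSucc_lt_last i).ne (π.injective hi))
    refine (containsSquare_iff _ (extR t) ?_).2 (extR_sq t ht)
    intro i j
    refine Fin.lastCases ?_ (fun i => ?_) i <;> refine Fin.lastCases ?_ (fun j => ?_) j
    · simp
    · rw [(h j).2, hs]
      simp only [Fin.val_last, Fin.val_castSucc, extR, j.isLt, if_true, lt_irrefl, if_false]
      omega
    · rw [(h i).1, hs]
      simp only [Fin.val_last, Fin.val_castSucc, extR, i.isLt, if_true, lt_irrefl, if_false]
      omega
    · rw [hπ i j, Fin.lt_def, hs, hs]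
      simp only [Fin.val_castSucc, extR, i.isLt, j.isLt, if_true]
      omega
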